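/- Let π be a finite group and let 0 → A → B → C → 0 be a short exact sequence of ℤπ-lattices. Then there is a ℤπ-lattice D fitting into short exact sequences of ℤπ-modules 0 → Γ(A) → Γ(B) → D → 0 and 0 → A ⊗_ℤ C → D → Γ(C) → 0, where Γ is Whitehead's quadratic functor with diagonal π-action on Γ(M) ⊆ M ⊗ M. -/

import Mathlib

open TensorProduct CategoryTheory

/-- The submodule of symmetric tensors of `V ⊗[R] V`, i.e. the elements fixed by the swap
involution `a ⊗ b ↦ b ⊗ a`. -/
noncomputable def symTensorsR (R : Type*) (V : Type*) [CommRing R] [AddCommGroup V]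
    [Module R V] :=
  LinearMap.ker ((TensorProduct.comm R V V).toLinearMap - LinearMap.id)

/-- The subgroup of symmetric tensors of `V ⊗[ℤ] V`.  For `V` free abelian this realises
Whitehead's quadratic functor `Γ(V)`. -/
noncomputable abbrev symTensors (V : Type*) [AddCommGroup V] [Module ℤ V] :=
  symTensorsR ℤ V

section SubQuot
variable {R : Type*} [CommRing R] {G : Type*} [Group G] {V : Type*} [AddCommGroup V]
  [Module R V]

/-- The restriction of a representation to an invariant submodule. -/
def subRep (ρ : Representation R G V) (p : Submodule R V)
    (hp : ∀ g : G, ∀ x ∈ p, ρ g x ∈ p) : Representation R G p where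
  toFun g := (ρ g).restrict (hp g)
  map_one' := by
    ext x
    simp [LinearMap.restrict_apply]
  map_mul' g h := by
    ext x
    simp [LinearMap.restrict_apply, map_mul]

/-- The representation induced on the quotient by an invariant submodule. -/
noncomputable def quotRep (ρ : Representation R G V) (p : Submodule R V)
    (hp : ∀ g : G, ∀ x ∈ p, ρ g x ∈ p) : Representation R G (V ⧸ p) where
  toFun g := Submodule.mapQ p p (ρ g) (hp g)
  map_one' := by
    apply LinearMap.ext
    intro x
    obtain ⟨v, rfl⟩ := Submodule.Quotient.mk_surjective p x
    simp [Submodule.mapQ_apply]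
  map_mul' g h := by
    apply LinearMap.ext
    intro x
    obtain ⟨v, rfl⟩ := Submodule.Quotient.mk_surjective p x
    simp [Submodule.mapQ_apply, map_mul]

end SubQuot

section GammaRep
variable {R : Type*} [CommRing R] {G : Type*} [Group G] {V : Type*} [AddCommGroup V]
  [Module R V]

lemma symTensors_invariant (ρ : Representation R G V) :
    ∀ g : G, ∀ x ∈ symTensorsR R V, (ρ.tprod ρ) g x ∈ symTensorsR R V := by
  intro g x hx
  have key : ∀ y : TensorProduct R V V, (TensorProduct.comm R V V) ((ρ.tprod ρ) g y)
      = (ρ.tprod ρ) g ((TensorProduct.comm R V V) y) := by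
    intro y
    induction y using TensorProduct.induction_on with
    | zero => simp
    | tmul a b => simp [Representation.tprod_apply]
    | add y z hy hz =>
        simp only [map_add, hy, hz]
  simp only [symTensorsR, LinearMap.mem_ker, LinearMap.sub_apply,
    LinearMap.id_apply, sub_eq_zero, LinearEquiv.coe_coe] at hx ⊢
  rw [key, hx]

/-- Whitehead's functor `Γ(V)` (realised as the symmetric tensors in `V ⊗ V`) as a
representation, with the diagonal `G`-action. -/
noncomputable def gammaRep (ρ : Representation R G V) : Representation R G ↥(symTensorsR R V) :=
  subRep (ρ.tprod ρ) (symTensorsR R V) (symTensors_invariant ρ)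

/-- The direct sum of two representations. -/
def prodRep {W : Type*} [AddCommGroup W] [Module R W]
    (ρ : Representation R G V) (σ : Representation R G W) : Representation R G (V × W) where
  toFun g := (ρ g).prodMap (σ g)
  map_one' := by
    apply LinearMap.ext
    rintro ⟨a, b⟩
    simp
  map_mul' g h := by
    apply LinearMap.ext
    rintro ⟨a, b⟩
    simp [map_mul]

end GammaRep

section RepObj
variable {k : Type} [CommRing k] {G : Type} [Group G]

/-- `Γ(V)` (the symmetric tensors with the diagonal action) as an object of `Rep k G`. -/
noncomputable def gammaRepObj {V : Type} [AddCommGroup V] [Module k V]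
    (ρ : Representation k G V) : Rep k G :=
  Rep.of (gammaRep ρ)

/-- `V ⊗ W` with the diagonal action as an object of `Rep k G`. -/
noncomputable def tprodRepObj {V W : Type} [AddCommGroup V] [Module k V] [AddCommGroup W]
    [Module k W] (ρ : Representation k G V) (σ : Representation k G W) : Rep k G :=
  Rep.of (ρ.tprod σ)

end RepObj

/-!
`D` is realised as the image of `Γ(B)` under `1 ⊗ p : B ⊗ B → B ⊗ C`. An element of `Γ(B)` killed
by `1 ⊗ p` is, being symmetric, also killed by `p ⊗ 1`, hence lies in the image of `A ⊗ A`. In the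
other sequence, `D` contains the image of `A ⊗ C`, which is the kernel of `p ⊗ 1 : B ⊗ C → C ⊗ C`,
because `(1 ⊗ p) (a ⊗ b + b ⊗ a) = a ⊗ p b`. Projectivity of `C` splits `p`, so `Γ(p)` is
surjective.
-/

section TensorProduct
variable {R : Type*} [CommRing R]

lemma isTorsionFree_tensorProduct_of_flat (M N : Type*) [AddCommGroup M] [Module R M]
    [AddCommGroup N] [Module R N] [Module.IsTorsionFree R M] [Module.Flat R N] :
    Module.IsTorsionFree R (M ⊗[R] N) where
  isSMulRegular _ hr := IsSMulRegular.rTensor N hr.isSMulRegular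

variable {M N P M' N' P' : Type*} [AddCommGroup M] [Module R M] [AddCommGroup N] [Module R N]
  [AddCommGroup P] [Module R P] [AddCommGroup M'] [Module R M'] [AddCommGroup N'] [Module R N']
  [AddCommGroup P'] [Module R P']

lemma mem_range_map_of_lTensor_eq_zero_of_rTensor_eq_zero [Module.Flat R P]
    {f : M →ₗ[R] N} {g : N →ₗ[R] P} {f' : M' →ₗ[R] N'} {g' : N' →ₗ[R] P'}
    (hfg : Function.Exact f g) (hg : Function.Surjective g)
    (hf' : Function.Injective f') (hfg' : Function.Exact f' g') (hg' : Function.Surjective g')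
    {x : N ⊗[R] N'} (hl : g'.lTensor N x = 0) (hr : g.rTensor N' x = 0) :
    x ∈ LinearMap.range (TensorProduct.map f f') := by
  obtain ⟨y, rfl⟩ := (lTensor_exact N hfg' hg' x).1 hl
  have hy : g.rTensor M' y = 0 := by
    apply Module.Flat.lTensor_preserves_injective_linearMap (M := P) f' hf'
    rw [map_zero, ← hr, ← LinearMap.comp_apply, ← LinearMap.comp_apply,
      LinearMap.lTensor_comp_rTensor, LinearMap.rTensor_comp_lTensor]
  obtain ⟨z, rfl⟩ := (rTensor_exact M' hfg hg y).1 hy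
  exact ⟨z, by rw [← LinearMap.lTensor_comp_rTensor, LinearMap.comp_apply]⟩

lemma leftInverse_tensorProduct_map {f : M →ₗ[R] N} {g : N →ₗ[R] M} {f' : M' →ₗ[R] N'}
    {g' : N' →ₗ[R] M'} (h : g ∘ₗ f = LinearMap.id) (h' : g' ∘ₗ f' = LinearMap.id) :
    Function.LeftInverse (TensorProduct.map g g') (TensorProduct.map f f') := fun x => by
  rw [← LinearMap.comp_apply, ← TensorProduct.map_comp, h, h', TensorProduct.map_id,
    LinearMap.id_apply]

lemma map_tprod_apply {G : Type*} [Monoid G] {ρ : Representation R G M} {σ : Representation R G N}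
    {ρ' : Representation R G M'} {σ' : Representation R G N'} {f : M →ₗ[R] N} {f' : M' →ₗ[R] N'}
    (hf : ∀ g x, f (ρ g x) = σ g (f x)) (hf' : ∀ g x, f' (ρ' g x) = σ' g (f' x))
    (g : G) (x : M ⊗[R] M') :
    TensorProduct.map f f' (ρ.tprod ρ' g x) = σ.tprod σ' g (TensorProduct.map f f' x) :=
  Representation.IntertwiningMap.isIntertwining _ _
    ((f.intertwiningMap_of_isIntertwiningMap ρ σ hf).tensor
      (f'.intertwiningMap_of_isIntertwiningMap ρ' σ' hf')) g x

end TensorProduct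

section Int
variable {M : Type*} [AddCommGroup M] {_ : Module ℤ M}

-- The left-hand side refers to the `ℤ`-action coming from `AddCommGroup M`, the right-hand side to
-- the given one.
lemma noZeroSMulDivisors_int_iff_isTorsionFree :
    NoZeroSMulDivisors ℤ M ↔ Module.IsTorsionFree ℤ M := by
  obtain rfl : ‹Module ℤ M› = AddCommGroup.toIntModule M := Subsingleton.elim _ _
  rw [noZeroSMulDivisors_iff, Module.isTorsionFree_iff_smul_eq_zero]

lemma finite_toIntModule (h : Module.Finite ℤ M) :
    @Module.Finite ℤ M _ _ (AddCommGroup.toIntModule M) :=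
  Subsingleton.elim ‹Module ℤ M› (AddCommGroup.toIntModule M) ▸ h

end Int

section SymTensors
variable {R V W : Type*} [CommRing R] [AddCommGroup V] [Module R V] [AddCommGroup W] [Module R W]

lemma mem_symTensorsR {x : V ⊗[R] V} : x ∈ symTensorsR R V ↔ TensorProduct.comm R V V x = x := by
  simp [symTensorsR, sub_eq_zero]

lemma tmul_add_tmul_mem_symTensorsR (v w : V) : v ⊗ₜ[R] w + w ⊗ₜ v ∈ symTensorsR R V :=
  mem_symTensorsR.2 (by simp [add_comm])

lemma map_mem_symTensorsR (f : V →ₗ[R] W) {x : V ⊗[R] V} (hx : x ∈ symTensorsR R V) :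
    TensorProduct.map f f x ∈ symTensorsR R W := by
  rw [mem_symTensorsR, ← TensorProduct.map_comm, mem_symTensorsR.1 hx]

lemma map_mem_symTensorsR_iff {f : V →ₗ[R] W} (hf : Function.Injective (TensorProduct.map f f))
    {x : V ⊗[R] V} : TensorProduct.map f f x ∈ symTensorsR R W ↔ x ∈ symTensorsR R V := by
  rw [mem_symTensorsR, mem_symTensorsR, ← TensorProduct.map_comm, hf.eq_iff]

lemma rTensor_eq_zero_of_lTensor_eq_zero {f : V →ₗ[R] W} {x : V ⊗[R] V}
    (hx : x ∈ symTensorsR R V) (hfx : f.lTensor V x = 0) : f.rTensor V x = 0 := by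
  have h := TensorProduct.map_comm f LinearMap.id x
  rw [mem_symTensorsR.1 hx] at h
  exact h.trans ((congrArg _ hfx).trans (map_zero _))

/-- The map `Γ(f) : Γ(V) → Γ(W)` induced by `f : V → W`, i.e. the restriction of `f ⊗ f` to
symmetric tensors. -/
noncomputable def symTensorsMap (f : V →ₗ[R] W) : symTensorsR R V →ₗ[R] symTensorsR R W :=
  (TensorProduct.map f f).restrict fun _ => map_mem_symTensorsR f

lemma symTensorsMap_leftInverse {f : V →ₗ[R] W} {g : W →ₗ[R] V} (h : g ∘ₗ f = LinearMap.id) :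
    Function.LeftInverse (symTensorsMap g) (symTensorsMap f) :=
  fun x => Subtype.ext (leftInverse_tensorProduct_map h h x.1)

end SymTensors

/-- The image of `Γ(B)` under `1 ⊗ p : B ⊗ B → B ⊗ C`. For `0 → A → B → C → 0` exact this is the
lattice `D` of Bauer's lemma, a model of `Γ(B) / Γ(A)` which is visibly torsion-free. -/
noncomputable def symTensorsImage {R B C : Type*} [CommRing R] [AddCommGroup B] [Module R B]
    [AddCommGroup C] [Module R C] (p : B →ₗ[R] C) : Submodule R (B ⊗[R] C) :=
  (symTensorsR R B).map (p.lTensor B)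

namespace symTensorsImage

section Linear
variable {R A B C : Type*} [CommRing R] [AddCommGroup A] [Module R A] [AddCommGroup B] [Module R B]
  [AddCommGroup C] [Module R C] {i : A →ₗ[R] B} {p : B →ₗ[R] C}

/-- The projection `Γ(B) → D` induced by `1 ⊗ p`. -/
noncomputable def ofSymTensors (p : B →ₗ[R] C) : symTensorsR R B →ₗ[R] symTensorsImage p :=
  (p.lTensor B).submoduleMap (symTensorsR R B)

lemma exact_symTensorsMap_ofSymTensors [Module.Flat R C] (hi : Function.Injective i)
    (hii : Function.Injective (TensorProduct.map i i)) (hex : Function.Exact i p)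
    (hp : Function.Surjective p) :
    Function.Exact (symTensorsMap i) (ofSymTensors p) := by
  rintro ⟨x, hx⟩
  constructor
  · intro h
    have hl : p.lTensor B x = 0 := congrArg Subtype.val h
    obtain ⟨y, rfl⟩ := mem_range_map_of_lTensor_eq_zero_of_rTensor_eq_zero hex hp hi hex hp hl
      (rTensor_eq_zero_of_lTensor_eq_zero hx hl)
    exact ⟨⟨y, (map_mem_symTensorsR_iff hii).1 hx⟩, rfl⟩
  · rintro ⟨y, hy⟩
    obtain rfl : TensorProduct.map i i y = x := congrArg Subtype.val hy
    refine Subtype.ext ?_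
    change (p.lTensor B ∘ₗ TensorProduct.map i i) y = 0
    rw [LinearMap.lTensor_comp_map, hex.linearMap_comp_eq_zero, TensorProduct.map_zero_right,
      LinearMap.zero_apply]

lemma rTensor_mem (hex : Function.Exact i p) (hp : Function.Surjective p) (x : A ⊗[R] C) :
    i.rTensor C x ∈ symTensorsImage p := by
  induction x using TensorProduct.induction_on with
  | zero => rw [map_zero]; exact zero_mem _
  | add x y hx hy => rw [map_add]; exact add_mem hx hy
  | tmul a c =>
    obtain ⟨b, rfl⟩ := hp c
    exact ⟨i a ⊗ₜ b + b ⊗ₜ i a, tmul_add_tmul_mem_symTensorsR _ _,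
      by simp [hex.apply_apply_eq_zero]⟩

/-- The inclusion `A ⊗ C → D` induced by `i ⊗ 1`. -/
noncomputable def ofTensor (hex : Function.Exact i p) (hp : Function.Surjective p) :
    A ⊗[R] C →ₗ[R] symTensorsImage p :=
  (i.rTensor C).codRestrict _ (rTensor_mem hex hp)

lemma ofTensor_injective [Module.Flat R C] (hi : Function.Injective i) (hex : Function.Exact i p)
    (hp : Function.Surjective p) : Function.Injective (ofTensor hex hp) :=
  (LinearMap.injective_codRestrict_iff ..).2
    (Module.Flat.rTensor_preserves_injective_linearMap i hi)

lemma rTensor_mem_symTensorsR {x : B ⊗[R] C} (hx : x ∈ symTensorsImage p) :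
    p.rTensor C x ∈ symTensorsR R C := by
  obtain ⟨y, hy, rfl⟩ := hx
  rw [← LinearMap.comp_apply, LinearMap.rTensor_comp_lTensor]
  exact map_mem_symTensorsR p hy

/-- The projection `D → Γ(C)` induced by `p ⊗ 1`. -/
noncomputable def toSymTensors (p : B →ₗ[R] C) : symTensorsImage p →ₗ[R] symTensorsR R C :=
  (p.rTensor C).restrict fun _ => rTensor_mem_symTensorsR

lemma toSymTensors_ofSymTensors (p : B →ₗ[R] C) (x : symTensorsR R B) :
    toSymTensors p (ofSymTensors p x) = symTensorsMap p x :=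
  Subtype.ext (LinearMap.congr_fun (LinearMap.rTensor_comp_lTensor _ p p) x.1)

lemma toSymTensors_surjective (h : Function.Surjective (symTensorsMap p)) :
    Function.Surjective (toSymTensors p) :=
  .of_comp (g := ofSymTensors p) (by simpa only [Function.comp_def, toSymTensors_ofSymTensors])

lemma exact_ofTensor_toSymTensors (hex : Function.Exact i p) (hp : Function.Surjective p) :
    Function.Exact (ofTensor hex hp) (toSymTensors p) := fun x => by
  simp only [Subtype.ext_iff, Set.mem_range]
  exact rTensor_exact C hex hp x

end Linear

section Rep
variable {R G B C : Type*} [CommRing R] [Group G] [AddCommGroup B] [Module R B] [AddCommGroup C]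
  [Module R C] {ρB : Representation R G B} {ρC : Representation R G C} {p : B →ₗ[R] C}

lemma tprod_mem (hp : ∀ g b, p (ρB g b) = ρC g (p b)) (g : G) (x : B ⊗[R] C)
    (hx : x ∈ symTensorsImage p) : ρB.tprod ρC g x ∈ symTensorsImage p := by
  obtain ⟨y, hy, rfl⟩ := hx
  exact ⟨ρB.tprod ρB g y, symTensors_invariant ρB g y hy,
    map_tprod_apply (fun _ _ => rfl) hp g y⟩

/-- The diagonal action on `D ⊆ B ⊗ C`. -/
noncomputable def rep (hp : ∀ g b, p (ρB g b) = ρC g (p b)) :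
    Representation R G (symTensorsImage p) :=
  subRep (ρB.tprod ρC) (symTensorsImage p) (tprod_mem hp)

end Rep

end symTensorsImage

open symTensorsImage in
theorem stmt4_general {R G A B C : Type} [CommRing R] [IsNoetherianRing R] [Group G]
    [AddCommGroup A] [Module R A] [AddCommGroup B] [Module R B] [AddCommGroup C] [Module R C]
    [Module.Finite R B] [Module.IsTorsionFree R B] [Module.Finite R C] [Module.Projective R C]
    (ρA : Representation R G A) (ρB : Representation R G B) (ρC : Representation R G C)
    (i : A →ₗ[R] B) (p : B →ₗ[R] C)
    (hi : ∀ g a, i (ρA g a) = ρB g (i a)) (hp : ∀ g b, p (ρB g b) = ρC g (p b))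
    (hinj : Function.Injective i) (hsurj : Function.Surjective p)
    (hex : Function.Exact i p) :
    ∃ D : Rep R G, Module.Finite R D.V ∧ Module.IsTorsionFree R D.V ∧
      ∃ (α : gammaRepObj ρA ⟶ gammaRepObj ρB) (β : gammaRepObj ρB ⟶ D)
        (γ : tprodRepObj ρA ρC ⟶ D) (δ : D ⟶ gammaRepObj ρC),
        Function.Injective α.hom ∧ Function.Surjective β.hom ∧
          Function.Exact α.hom β.hom ∧
        Function.Injective γ.hom ∧ Function.Surjective δ.hom ∧
          Function.Exact γ.hom δ.hom := by
  obtain ⟨s, hps⟩ := Module.projective_lifting_property p LinearMap.id hsurj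
  obtain ⟨r, hri⟩ : ∃ r, r ∘ₗ i = LinearMap.id :=
    (((Function.Exact.split_tfae' hex).out 0 1 rfl rfl).1 ⟨hinj, s, hps⟩).2
  have hBC := isTorsionFree_tensorProduct_of_flat (R := R) B C
  exact ⟨Rep.of (rep hp), inferInstanceAs (Module.Finite R (symTensorsImage p)),
    inferInstanceAs (Module.IsTorsionFree R (symTensorsImage p)),
    Rep.ofHom ((symTensorsMap i).intertwiningMap_of_isIntertwiningMap _ _
      fun g x => Subtype.ext (map_tprod_apply hi hi g x.1)),
    Rep.ofHom ((ofSymTensors p).intertwiningMap_of_isIntertwiningMap _ _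
      fun g x => Subtype.ext (map_tprod_apply (f := LinearMap.id) (fun _ _ => rfl) hp g x.1)),
    Rep.ofHom ((ofTensor hex hsurj).intertwiningMap_of_isIntertwiningMap _ _
      fun g x => Subtype.ext (map_tprod_apply (f' := LinearMap.id) hi (fun _ _ => rfl) g x)),
    Rep.ofHom ((toSymTensors p).intertwiningMap_of_isIntertwiningMap _ _
      fun g x => Subtype.ext (map_tprod_apply (f' := LinearMap.id) hp (fun _ _ => rfl) g x.1)),
    (symTensorsMap_leftInverse hri).injective,
    LinearMap.submoduleMap_surjective _ _,
    exact_symTensorsMap_ofSymTensors hinj (leftInverse_tensorProduct_map hri hri).injective hex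
      hsurj,
    ofTensor_injective hinj hex hsurj,
    toSymTensors_surjective (symTensorsMap_leftInverse hps).surjective,
    exact_ofTensor_toSymTensors hex hsurj⟩

/-- Bauer's Lemma: for a finite group `π` and a short exact sequence
`0 → A → B → C → 0` of `ℤπ`-lattices, there is a `ℤπ`-lattice `D` and short exact sequences of
`ℤπ`-modules `0 → Γ(A) → Γ(B) → D → 0` and `0 → A ⊗_ℤ C → D → Γ(C) → 0`, where `Γ` is
Whitehead's quadratic functor (the symmetric tensors with the diagonal `π`-action), and
`A ⊗_ℤ C` carries the diagonal `π`-action. -/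
theorem stmt4 {G A B C : Type} [Group G] [Finite G]
    [AddCommGroup A] [Module ℤ A] [AddCommGroup B] [Module ℤ B] [AddCommGroup C] [Module ℤ C]
    [Module.Finite ℤ A] [NoZeroSMulDivisors ℤ A] [Module.Finite ℤ B] [NoZeroSMulDivisors ℤ B]
    [Module.Finite ℤ C] [NoZeroSMulDivisors ℤ C]
    (ρA : Representation ℤ G A) (ρB : Representation ℤ G B) (ρC : Representation ℤ G C)
    (i : A →ₗ[ℤ] B) (p : B →ₗ[ℤ] C)
    (hi : ∀ g a, i (ρA g a) = ρB g (i a)) (hp : ∀ g b, p (ρB g b) = ρC g (p b))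
    (hinj : Function.Injective i) (hsurj : Function.Surjective p)
    (hex : Function.Exact i p) :
    ∃ D : Rep ℤ G, Module.Finite ℤ D.V ∧ NoZeroSMulDivisors ℤ D.V ∧
      ∃ (α : gammaRepObj ρA ⟶ gammaRepObj ρB) (β : gammaRepObj ρB ⟶ D)
        (γ : tprodRepObj ρA ρC ⟶ D) (δ : D ⟶ gammaRepObj ρC),
        Function.Injective α.hom ∧ Function.Surjective β.hom ∧
          Function.Exact α.hom β.hom ∧
        Function.Injective γ.hom ∧ Function.Surjective δ.hom ∧
          Function.Exact γ.hom δ.hom := by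
  have : Module.IsTorsionFree ℤ B := noZeroSMulDivisors_int_iff_isTorsionFree.1 ‹_›
  have : Module.IsTorsionFree ℤ C := noZeroSMulDivisors_int_iff_isTorsionFree.1 ‹_›
  obtain ⟨D, hfin, htf, hseq⟩ := stmt4_general ρA ρB ρC i p hi hp hinj hsurj hex
  exact ⟨D, finite_toIntModule hfin, noZeroSMulDivisors_int_iff_isTorsionFree.2 htf, hseq⟩
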